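/- Let μ ∈ ℝ, set α := −iμ/2, and let u : ℝ → ℂ be a smooth solution of the PII equation u''(x) = x·u(x) + 2·u(x)³ − α on ℝ, taking purely imaginary values on ℝ and satisfying the asymptotic expansion (A−): there exist d ∈ iℝ, φ ∈ ℝ and x₀, K > 0 such that |u(x) − α/x − d·(−x)^{−1/4}·sin( (2/3)(−x)^{3/2} − (3/4)·d²·ln(−x) + φ )| ≤ K·(−x)^{−7/4} for all x ≤ −x₀. Define w(x) := ∫₀ˣ exp( (2/3^{1/3}) ∫₀^y u(z/3^{1/3}) dz ) dy − C with C := (2·3^{1/3}/(1−iμ))·(u'(0) − u(0)²), v(x) := (2/3^{1/3})·u(x/3^{1/3}), g(x) := e^{iμ·ln|x|}·w(x)/x for x ≠ 0, and let g₋ := lim_{x→−∞} g(x) (which exists). Then ∫_{−∞}^{x} y^{−2}·w'(y)·e^{iμ·ln|y|}·v(y)² dy = (2/3)·(1−iμ)·g₋·(2d²/√3)·(−x)^{−3/2} + O((−x)^{−3}) as x → −∞. -/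

import Mathlib

/-!
With `v(x) = (2/3^{1/3}) u(x/3^{1/3})` the Painlevé equation becomes
`v'' = x v/3 + v³/2 + iμ/3`, and `w'' = v w'`. Hence `(x - 3v' + (3/2)v²) w'` has derivative
`(1 - iμ) w'`, and the constant `C` is chosen so that
`(1 - iμ) w = (x - 3v' + (3/2)v²) w'`. Put `t = -x`, `V(t) = v(-t)`,
`H(t) = e^{iμ ln t} w'(-t)`, `Γ(t) = g(-t)`. Since `u` is imaginary, `|H| = 1`; moreover
`H' = -H (V - iμ/t)`, `Γ' = (H - (1 - iμ)Γ)/t` and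
`(1 - iμ)Γ = H (1 - 3V'/t - 3V²/(2t))`.

The integral in question is `∫_T^∞ t⁻² H V² dt`, with `V = O(t^{-1/4})`. A correction `B(t)` is
constructed such that integral plus leading term plus `B` has derivative `O(t⁻⁴)` and tends to `0`,
while `B = O(t⁻³)`; integrating the derivative bound gives the claim (`core_asymptotics`). It works
as follows.

* `H` is replaced by `(1 - iμ)Γ + 3HV'/t + O(t^{-3/2})`. The term `3 t⁻³ H V² V'` is the derivative
  of `t⁻³ H V³` up to `O(t⁻⁴)`, so no bound on `V'` is ever needed.
* `Γ - g₋ = O(t^{-3/2})`: by the same device `Γ - 3HV/t²` has derivative `O(t^{-5/2})`.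
* `V² = -D² t^{-1/2} sin²Θ - 2μD t^{-5/4} sin Θ + O(t⁻²)` by the assumed expansion. The mean of
  `sin²Θ` gives the leading term, and the oscillating parts are derivatives of
  `t⁻³ sin 2Θ` and `t^{-15/4} cos Θ` up to `O(t⁻⁴)`, since `Θ' = κ t^{1/2} + β/t`.

All powers of `t` that occur are powers of `q = t^{-1/4}`, so orders are counted by natural numbers.
-/

/-- The real cube root of 3. -/
noncomputable def cbrt3 : ℝ := (3 : ℝ) ^ ((1:ℝ)/3)

open Filter Topology Asymptotics MeasureTheory

/-! ### Orders of decay, counted in powers of `t^{-1/4}` -/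

/-- The decay scale `t^{-1/4}`. -/
noncomputable def quarter (t : ℝ) : ℝ := t ^ (-(1:ℝ)/4)

/-- `OrderO n f` means `f(t) = O(t^{-n/4})` as `t → ∞`. -/
def OrderO (n : ℕ) (f : ℝ → ℂ) : Prop := f =O[atTop] fun t => quarter t ^ n

lemma quarter_pos {t : ℝ} (ht : 0 < t) : 0 < quarter t := Real.rpow_pos_of_pos ht _

lemma quarter_pow {t : ℝ} (ht : 0 < t) (n : ℕ) : quarter t ^ n = t ^ (-(n:ℝ)/4) := by
  rw [quarter, ← Real.rpow_natCast, ← Real.rpow_mul ht.le]; congr 1; ring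

lemma quarter_four {t : ℝ} (ht : 0 < t) : quarter t ^ 4 = t⁻¹ := by
  rw [quarter_pow ht, ← Real.rpow_neg_one]; norm_num

lemma quarter_eight {t : ℝ} (ht : 0 < t) : quarter t ^ 8 = (t ^ 2)⁻¹ := by
  rw [show quarter t ^ 8 = (quarter t ^ 4) ^ 2 by ring, quarter_four ht, inv_pow]

lemma quarter_le_one {t : ℝ} (ht : 1 ≤ t) : quarter t ≤ 1 :=
  Real.rpow_le_one_of_one_le_of_nonpos ht (by norm_num)

lemma hasDerivAt_quarter {t : ℝ} (ht : 0 < t) :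
    HasDerivAt quarter (-(1/4) * quarter t ^ 5) t := by
  have h := Real.hasDerivAt_rpow_const (x := t) (p := -(1:ℝ)/4) (Or.inl ht.ne')
  refine h.congr_deriv ?_
  rw [quarter_pow ht]; norm_num

lemma hasDerivAt_quarter_pow {t : ℝ} (ht : 0 < t) (n : ℕ) :
    HasDerivAt (fun s => quarter s ^ n) (-(n/4) * quarter t ^ (n+4)) t := by
  refine ((hasDerivAt_quarter ht).pow n).congr_deriv ?_
  rcases n with _ | n
  · simp
  · push_cast; ring

lemma tendsto_quarter : Tendsto quarter atTop (𝓝 0) := by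
  have h := tendsto_rpow_neg_atTop (y := (1:ℝ)/4) (by norm_num)
  refine h.congr fun t => ?_
  rw [quarter]; congr 1; ring

namespace OrderO
variable {m n : ℕ} {f g : ℝ → ℂ}

lemma mul (hf : OrderO m f) (hg : OrderO n g) : OrderO (m+n) (fun t => f t * g t) := by
  have := IsBigO.mul hf hg
  simpa only [OrderO, pow_add] using this

lemma add (hf : OrderO n f) (hg : OrderO n g) : OrderO n (fun t => f t + g t) :=
  IsBigO.add hf hg

lemma sub (hf : OrderO n f) (hg : OrderO n g) : OrderO n (fun t => f t - g t) :=
  IsBigO.sub hf hg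

lemma const_mul (c : ℂ) (hf : OrderO n f) : OrderO n (fun t => c * f t) :=
  IsBigO.const_mul_left hf c

lemma mono (hf : OrderO m f) (h : n ≤ m) : OrderO n f := by
  refine IsBigO.trans hf (IsBigO.of_bound 1 ?_)
  filter_upwards [eventually_ge_atTop 1] with t ht
  have h0 := quarter_pos (lt_of_lt_of_le one_pos ht)
  rw [Real.norm_of_nonneg (by positivity), Real.norm_of_nonneg (by positivity), one_mul]
  exact pow_le_pow_of_le_one h0.le (quarter_le_one ht) h

lemma pow (hf : OrderO m f) (k : ℕ) : OrderO (m*k) (fun t => f t ^ k) := by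
  have := IsBigO.pow hf k
  simpa only [OrderO, pow_mul] using this

lemma congr' (hf : OrderO n f) (h : ∀ᶠ t in atTop, g t = f t) : OrderO n g :=
  IsBigO.congr' hf (h.mono fun _ h => h.symm) EventuallyEq.rfl

lemma tendsto_zero (hf : OrderO n f) (hn : n ≠ 0) : Tendsto f atTop (𝓝 0) := by
  refine IsBigO.trans_tendsto hf ?_
  simpa [hn] using tendsto_quarter.pow n

lemma of_bound {C : ℝ} (h : ∀ᶠ t in atTop, ‖f t‖ ≤ C * quarter t ^ n) : OrderO n f := by
  refine IsBigO.of_bound C ?_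
  filter_upwards [h, eventually_gt_atTop 0] with t h ht
  have h0 := quarter_pos ht
  rwa [Real.norm_of_nonneg (by positivity)]

lemma exists_bound (hf : OrderO n f) : ∃ C > 0, ∀ᶠ t in atTop, ‖f t‖ ≤ C * quarter t ^ n := by
  obtain ⟨C, hC, h⟩ := IsBigO.exists_pos hf
  refine ⟨C, hC, ?_⟩
  filter_upwards [h.bound, eventually_gt_atTop 0] with t h ht
  have h0 := quarter_pos ht
  rwa [Real.norm_of_nonneg (by positivity)] at h

end OrderO

lemma orderO_quarter (n : ℕ) : OrderO n (fun t => (quarter t : ℂ) ^ n) :=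
  OrderO.of_bound (C := 1) <| by
    filter_upwards [eventually_gt_atTop 0] with t ht
    rw [norm_pow, Complex.norm_real, Real.norm_of_nonneg (quarter_pos ht).le, one_mul]

lemma orderO_ofReal_bounded {f : ℝ → ℝ} (h : ∀ t, |f t| ≤ 1) :
    OrderO 0 (fun t => (f t : ℂ)) :=
  OrderO.of_bound (C := 1) <| Eventually.of_forall fun t => by simpa using h t

/-- A function converging to `L` whose derivative is `O(t^{-n/4-1})` is `L + O(t^{-n/4})`. -/
lemma OrderO.of_deriv {n : ℕ} (hn : n ≠ 0) {F F' : ℝ → ℂ} {L : ℂ}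
    (hF : ∀ t > 0, HasDerivAt F (F' t) t) (hF' : OrderO (n+4) F')
    (hL : Tendsto F atTop (𝓝 L)) : OrderO n (fun t => F t - L) := by
  obtain ⟨C, hC, hb⟩ := hF'.exists_bound
  obtain ⟨T, hT⟩ := eventually_atTop.1 hb
  have hn' : (0:ℝ) < n := by positivity
  refine OrderO.of_bound (C := C * (4/n)) ?_
  filter_upwards [eventually_ge_atTop T, eventually_gt_atTop 0] with t hTt ht
  -- the bound is a primitive of `C * quarter s ^ (n + 4)` vanishing at `t`
  have key : ∀ s ≥ t, ‖F s - F t‖ ≤ C * (4/n) * quarter t ^ n := by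
    intro s hs
    have := image_norm_le_of_norm_deriv_right_le_deriv_boundary'
      (f := fun s => F s - F t) (f' := F') (a := t) (b := s)
      (B := fun s => C * (4/n) * (quarter t ^ n - quarter s ^ n))
      (B' := fun s => C * (4/n) * (-(-(n/4) * quarter s ^ (n+4))))
      (fun r hr => ((hF r (ht.trans_le hr.1)).continuousAt.sub
        continuousAt_const).continuousWithinAt)
      (fun r hr => ((hF r (ht.trans_le hr.1)).sub_const _).hasDerivWithinAt)
      (by simp)
      (fun r hr => (((hasDerivAt_quarter_pow (ht.trans_le hr.1) n).const_sub _).const_mul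
        _).continuousAt.continuousWithinAt)
      (fun r hr => (((hasDerivAt_quarter_pow (ht.trans_le hr.1) n).const_sub _).const_mul
        _).hasDerivWithinAt)
      (fun r hr => by
        have := hT r (hTt.trans hr.1)
        refine this.trans (le_of_eq ?_)
        field_simp)
      (x := s) ⟨hs, le_rfl⟩
    refine this.trans ?_
    have h0 := quarter_pos (ht.trans_le hs)
    have : 0 ≤ quarter s ^ n := by positivity
    gcongr
    linarith
  have hlim : Tendsto (fun s => ‖F s - F t‖) atTop (𝓝 ‖L - F t‖) :=
    (hL.sub tendsto_const_nhds).norm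
  rw [norm_sub_rev]
  exact le_of_tendsto hlim (by filter_upwards [eventually_ge_atTop t] with s hs using key s hs)

/-! ### Integration of decaying and oscillating functions -/

/-- Integrability and differentiability of the tail integral of a function decaying at least like
`t^{-5/4}`. -/
lemma tail_integral {f : ℝ → ℂ} (hf : ContinuousOn f (Set.Ioi 0)) {n : ℕ} (hn : 5 ≤ n)
    (hO : OrderO n f) :
    (∀ T > 0, IntegrableOn f (Set.Ici T)) ∧
    (∀ t > 0, HasDerivAt (fun s => ∫ y in Set.Ioi s, f y) (-f t) t) ∧
    Tendsto (fun s => ∫ y in Set.Ioi s, f y) atTop (𝓝 0) := by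
  have hint : ∀ T > 0, IntegrableOn f (Set.Ici T) := by
    intro T hT
    have hc : ContinuousOn f (Set.Ici T) := hf.mono fun x hx => hT.trans_le hx
    refine (hc.locallyIntegrableOn measurableSet_Ici).integrableOn_of_isBigO_atTop
      (g := fun t => t ^ (-(5:ℝ)/4)) ?_ ?_
    · refine IsBigO.congr' (hO.mono hn) EventuallyEq.rfl ?_
      filter_upwards [eventually_gt_atTop 0] with t ht
      rw [quarter_pow ht]; norm_num
    · exact ⟨Set.Ioi 1, Ioi_mem_atTop 1,
        integrableOn_Ioi_rpow_of_lt (by norm_num) one_pos⟩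
  have hint' : ∀ T > 0, IntegrableOn f (Set.Ioi T) := fun T hT =>
    (hint T hT).mono_set Set.Ioi_subset_Ici_self
  refine ⟨hint, fun t ht => ?_, tendsto_integral_Ioi_zero tendsto_id⟩
  have h2 : (0:ℝ) < t / 2 := by linarith
  have hD : HasDerivAt (fun s => ∫ y in (t/2)..s, f y) (f t) t := by
    refine intervalIntegral.integral_hasDerivAt_right ?_ ?_ ?_
    · refine ContinuousOn.intervalIntegrable (hf.mono fun x hx => ?_)
      rw [Set.uIcc_of_le (by linarith)] at hx
      exact h2.trans_le hx.1
    · exact hf.stronglyMeasurableAtFilter isOpen_Ioi _ ht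
    · exact hf.continuousAt (Ioi_mem_nhds ht)
  refine (hD.const_sub (∫ y in Set.Ioi (t/2), f y)).congr_of_eventuallyEq ?_
  filter_upwards [Ioi_mem_nhds ht] with s hs
  rw [eq_sub_iff_add_eq', intervalIntegral.integral_interval_add_Ioi (hint' _ h2) (hint' _ hs)]

/-- `t⁻³ sin 2Θ` is a primitive of `2κ t^{-5/2} cos 2Θ` up to `O(t⁻⁴)`. -/
lemma hasDerivAt_sin_phase {Θ : ℝ → ℝ} {κ β t : ℝ} (ht : 0 < t)
    (hΘ : HasDerivAt Θ (κ * (quarter t ^ 2)⁻¹ + β * quarter t ^ 4) t) :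
    HasDerivAt (fun s => quarter s ^ 12 * Real.sin (2 * Θ s))
      (2 * κ * quarter t ^ 10 * Real.cos (2 * Θ t) +
        quarter t ^ 16 * (2 * β * Real.cos (2 * Θ t) - 3 * Real.sin (2 * Θ t))) t := by
  refine ((hasDerivAt_quarter_pow ht 12).mul (hΘ.const_mul 2).sin).congr_deriv ?_
  have := (quarter_pos ht).ne'
  field_simp
  push_cast
  ring

/-- `t^{-15/4} cos Θ` is a primitive of `-κ t^{-13/4} sin Θ` up to `O(t^{-19/4})`. -/
lemma hasDerivAt_cos_phase {Θ : ℝ → ℝ} {κ β t : ℝ} (ht : 0 < t)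
    (hΘ : HasDerivAt Θ (κ * (quarter t ^ 2)⁻¹ + β * quarter t ^ 4) t) :
    HasDerivAt (fun s => quarter s ^ 15 * Real.cos (Θ s))
      (-κ * quarter t ^ 13 * Real.sin (Θ t) +
        quarter t ^ 19 * (-β * Real.sin (Θ t) - 15/4 * Real.cos (Θ t))) t := by
  refine ((hasDerivAt_quarter_pow ht 15).mul hΘ.cos).congr_deriv ?_
  have := (quarter_pos ht).ne'
  field_simp
  push_cast
  ring

/-- The asymptotics on the positive half-line `t = -x`, for any triple `(V, H, Γ)` obeying the
first-order relations derived from Painlevé II; `quarter t ^ 4` stands for `1/t` and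
`quarter t ^ 8` for `1/t²`. -/
theorem core_asymptotics (μ D κ β : ℝ) (hκ : κ ≠ 0) (V V' H Γ : ℝ → ℂ) (Θ : ℝ → ℝ) (gm : ℂ)
    (hV : ∀ t > 0, HasDerivAt V (V' t) t)
    (hH : ∀ t > 0, HasDerivAt H (-(H t * (V t - Complex.I * μ * (quarter t : ℂ) ^ 4))) t)
    (hH1 : ∀ t > 0, ‖H t‖ = 1)
    (hΓ : ∀ t > 0, HasDerivAt Γ ((H t - (1 - Complex.I * μ) * Γ t) * (quarter t : ℂ) ^ 4) t)
    (hrel : ∀ t > 0, (1 - Complex.I * μ) * Γ t =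
      H t * (1 - 3 * V' t * (quarter t : ℂ) ^ 4 - 3/2 * V t ^ 2 * (quarter t : ℂ) ^ 4))
    (hΓlim : Tendsto Γ atTop (𝓝 gm))
    (hΘ : ∀ t > 0, HasDerivAt Θ (κ * (quarter t ^ 2)⁻¹ + β * quarter t ^ 4) t)
    (hr : OrderO 7 (fun t => V t - (Complex.I * μ * (quarter t : ℂ) ^ 4 +
      Complex.I * D * ((quarter t : ℂ) * (Real.sin (Θ t) : ℂ))))) :
    (∀ T > 0, IntegrableOn (fun t => (quarter t : ℂ) ^ 8 * H t * V t ^ 2) (Set.Ici T)) ∧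
    OrderO 12 (fun T => (∫ t in Set.Ioi T, (quarter t : ℂ) ^ 8 * H t * V t ^ 2) +
      (1 - Complex.I * μ) * gm * (D ^ 2 / 3) * (quarter T : ℂ) ^ 6) := by
  have hI := Complex.I_sq
  have oq := orderO_quarter
  have oS : OrderO 0 (fun t => (Real.sin (Θ t) : ℂ)) :=
    orderO_ofReal_bounded fun t => Real.abs_sin_le_one _
  have oC : OrderO 0 (fun t => (Real.cos (Θ t) : ℂ)) :=
    orderO_ofReal_bounded fun t => Real.abs_cos_le_one _
  have oS2 : OrderO 0 (fun t => (Real.sin (2 * Θ t) : ℂ)) :=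
    orderO_ofReal_bounded fun t => Real.abs_sin_le_one _
  have oC2 : OrderO 0 (fun t => (Real.cos (2 * Θ t) : ℂ)) :=
    orderO_ofReal_bounded fun t => Real.abs_cos_le_one _
  have oq1 : OrderO 1 (fun t => (quarter t : ℂ)) := by simpa using oq 1
  have oH : OrderO 0 H := OrderO.of_bound (C := 1) <| by
    filter_upwards [eventually_gt_atTop 0] with t ht
    simp [hH1 t ht]
  have oab : OrderO 1 (fun t => Complex.I * μ * (quarter t : ℂ) ^ 4 +
      Complex.I * D * ((quarter t : ℂ) * (Real.sin (Θ t) : ℂ))) :=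
    (((oq 4).const_mul _).mono (by norm_num)).add ((oq1.mul oS).const_mul _)
  have oV : OrderO 1 V := ((hr.mono (by norm_num)).add oab).congr'
    (Eventually.of_forall fun t => by ring)
  -- the square of the leading expansion, up to an error of order `t⁻²`
  have oe : OrderO 8 (fun t => V t ^ 2 + D ^ 2 * (quarter t : ℂ) ^ 2 * (Real.sin (Θ t) : ℂ) ^ 2
      + 2 * μ * D * (quarter t : ℂ) ^ 5 * (Real.sin (Θ t) : ℂ)) := by
    refine ((hr.mul (oV.add oab)).add ((oq 8).const_mul (-μ ^ 2 : ℂ))).congr'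
      (Eventually.of_forall fun t => ?_)
    linear_combination ((μ * (quarter t : ℂ) ^ 4 +
      D * ((quarter t : ℂ) * (Real.sin (Θ t) : ℂ))) ^ 2) * hI
  have hq : ∀ n : ℕ, ∀ t > 0, HasDerivAt (fun s => (quarter s : ℂ) ^ n)
      (-(n/4) * (quarter t : ℂ) ^ (n+4)) t := by
    intro n t ht
    have := (hasDerivAt_quarter_pow ht n).ofReal_comp
    push_cast at this
    exact this
  -- `Γ` approaches its limit at rate `t^(-3/2)`: the slowly decaying part
  -- of `Γ'` is the derivative of `3HV/t²`
  have oΓ : OrderO 6 (fun t => Γ t - gm) := by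
    have h1 : OrderO 9 (fun t => 3 * (H t * V t * (quarter t : ℂ) ^ 8)) :=
      ((oH.mul oV).mul (oq 8)).const_mul 3
    have h2 : OrderO 6 (fun t => (Γ t - 3 * (H t * V t * (quarter t : ℂ) ^ 8)) - gm) := by
      refine OrderO.of_deriv (by norm_num)
        (F' := fun t => (9/2) * (H t * V t ^ 2 * (quarter t : ℂ) ^ 8) +
          (6 - 3 * Complex.I * μ) * (H t * V t * (quarter t : ℂ) ^ 12)) ?_ ?_ ?_
      · intro t ht
        refine ((hΓ t ht).sub ((((hH t ht).mul (hV t ht)).mul (hq 8 t ht)).const_mul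
          3)).congr_deriv ?_
        rw [hrel t ht]
        push_cast
        simp only [Pi.mul_apply]
        ring
      · exact (((oH.mul (oV.pow 2)).mul (oq 8)).const_mul _).add
          ((((oH.mul oV).mul (oq 12)).const_mul _).mono (by norm_num))
      · simpa using hΓlim.sub (h1.tendsto_zero (by norm_num))
    exact (h2.add (h1.mono (by norm_num))).congr' (Eventually.of_forall fun t => by ring)
  have of : OrderO 10 (fun t => (quarter t : ℂ) ^ 8 * H t * V t ^ 2) :=
    ((oq 8).mul oH).mul (oV.pow 2)
  have cf : ContinuousOn (fun t => (quarter t : ℂ) ^ 8 * H t * V t ^ 2) (Set.Ioi 0) :=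
    fun t ht => ((((hq 8 t ht).continuousAt).mul (hH t ht).continuousAt).mul
      ((hV t ht).continuousAt.pow 2)).continuousWithinAt
  obtain ⟨hint, hR, hR0⟩ := tail_integral cf (by norm_num) of
  refine ⟨hint, ?_⟩
  set M : ℂ := (1 - Complex.I * μ) * gm with hM
  have hκ' : (κ : ℂ) ≠ 0 := by exact_mod_cast hκ
  -- the correction terms, all of order `t⁻³`
  have oB : OrderO 12 (fun t => M * (D ^ 2 / (4 * κ)) *
        ((quarter t : ℂ) ^ 12 * (Real.sin (2 * Θ t) : ℂ)) +
      M * (2 * μ * D / κ) * ((quarter t : ℂ) ^ 15 * (Real.cos (Θ t) : ℂ)) +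
      H t * V t ^ 3 * (quarter t : ℂ) ^ 12) :=
    ((((oq 12).mul oS2).const_mul _).add
      ((((oq 15).mul oC).const_mul _).mono (by norm_num))).add
      (((oH.mul (oV.pow 3)).mul (oq 12)).mono (by norm_num))
  have oL : OrderO 6 (fun t => M * (D ^ 2 / 3) * (quarter t : ℂ) ^ 6) := (oq 6).const_mul _
  have key := OrderO.of_deriv (n := 12) (by norm_num)
    (F := fun T => ((∫ t in Set.Ioi T, (quarter t : ℂ) ^ 8 * H t * V t ^ 2) +
      M * (D ^ 2 / 3) * (quarter T : ℂ) ^ 6) + (M * (D ^ 2 / (4 * κ)) *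
        ((quarter T : ℂ) ^ 12 * (Real.sin (2 * Θ T) : ℂ)) +
      M * (2 * μ * D / κ) * ((quarter T : ℂ) ^ 15 * (Real.cos (Θ T) : ℂ)) +
      H T * V T ^ 3 * (quarter T : ℂ) ^ 12)) (L := 0)
    (F' := fun t => (-M) * ((quarter t : ℂ) ^ 8 *
        (V t ^ 2 + D ^ 2 * (quarter t : ℂ) ^ 2 * (Real.sin (Θ t) : ℂ) ^ 2
          + 2 * μ * D * (quarter t : ℂ) ^ 5 * (Real.sin (Θ t) : ℂ))) +
      (-(1 - Complex.I * μ)) * ((Γ t - gm) * (quarter t : ℂ) ^ 8 * V t ^ 2) +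
      (-(5/2)) * (H t * V t ^ 4 * (quarter t : ℂ) ^ 12) +
      (Complex.I * μ - 3) * (H t * V t ^ 3 * (quarter t : ℂ) ^ 16) +
      M * (D ^ 2 / (4 * κ)) * ((quarter t : ℂ) ^ 16 *
        (2 * β * (Real.cos (2 * Θ t) : ℂ) - 3 * (Real.sin (2 * Θ t) : ℂ))) +
      M * (2 * μ * D / κ) * ((quarter t : ℂ) ^ 19 *
        ((-β) * (Real.sin (Θ t) : ℂ) - 15/4 * (Real.cos (Θ t) : ℂ)))) ?_ ?_ ?_
  · exact (key.sub oB).congr' (Eventually.of_forall fun t => by ring)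
  · intro t ht
    have d1 := (hasDerivAt_sin_phase ht (hΘ t ht)).ofReal_comp
    have d2 := (hasDerivAt_cos_phase ht (hΘ t ht)).ofReal_comp
    have hcos : (Real.cos (2 * Θ t) : ℂ) = 1 - 2 * (Real.sin (Θ t) : ℂ) ^ 2 := by
      rw [Real.cos_two_mul, Real.cos_sq']; push_cast; ring
    simp only [Complex.ofReal_mul, Complex.ofReal_pow, Complex.ofReal_add, Complex.ofReal_sub,
      Complex.ofReal_neg, Complex.ofReal_ofNat, Complex.ofReal_div] at d1 d2
    refine (((hR t ht).add ((hq 6 t ht).const_mul _)).add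
      (((d1.const_mul _).add (d2.const_mul _)).add
        (((hH t ht).mul ((hV t ht).pow 3)).mul (hq 12 t ht)))).congr_deriv ?_
    have hr' := hrel t ht
    simp only [Pi.mul_apply, Pi.pow_apply]
    rw [hcos, hM]
    push_cast
    field_simp
    linear_combination (24 * κ * (quarter t : ℂ) ^ 8 * V t ^ 2) * hr'
  · refine (((((?_ : OrderO 16 _).add ?_).add ?_).add ?_).add ?_).add ?_
    · exact ((oq 8).mul oe).const_mul _
    · exact ((oΓ.mul (oq 8)).mul (oV.pow 2)).const_mul _
    · exact ((oH.mul (oV.pow 4)).mul (oq 12)).const_mul _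
    · exact (((oH.mul (oV.pow 3)).mul (oq 16)).const_mul _).mono (by norm_num)
    · exact ((oq 16).mul ((oC2.const_mul _).sub (oS2.const_mul _))).const_mul _
    · exact (((oq 19).mul ((oS.const_mul _).sub (oC.const_mul _))).const_mul _).mono
        (by norm_num)
  · simpa using (hR0.add (oL.tendsto_zero (by norm_num))).add (oB.tendsto_zero (by norm_num))

/-! ### Constants and the phase after rescaling by the cube root of 3 -/

lemma cbrt3_pos : 0 < cbrt3 := Real.rpow_pos_of_pos (by norm_num) _

lemma cbrt3_cube : cbrt3 ^ 3 = 3 := by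
  rw [cbrt3, ← Real.rpow_natCast, ← Real.rpow_mul (by norm_num)]; norm_num

lemma cbrt3_rpow : cbrt3 ^ ((3:ℝ)/2) = Real.sqrt 3 := by
  rw [cbrt3, ← Real.rpow_mul (by norm_num), Real.sqrt_eq_rpow]; norm_num

/-- The factor by which the rescaling `v(x) = (2/3^{1/3}) u(x/3^{1/3})` changes the amplitude of
the oscillation, squared. -/
lemma amplitude_sq : (2 / cbrt3 * cbrt3 ^ ((1:ℝ)/4)) ^ 2 = 4 / Real.sqrt 3 := by
  have h0 := cbrt3_pos
  rw [← cbrt3_rpow, mul_pow, div_pow, ← Real.rpow_natCast (cbrt3 ^ _), ← Real.rpow_mul h0.le,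
    show (1:ℝ)/4 * (2:ℕ) = 2 - 3/2 by norm_num, Real.rpow_sub h0, Real.rpow_two]
  field_simp
  norm_num

/-- In the rescaled variable the phase grows with frequency `t^{1/2}/√3 + b/t`. -/
lemma hasDerivAt_phase (b φ : ℝ) {t : ℝ} (ht : 0 < t) :
    HasDerivAt (fun t => 2/3 * (t / cbrt3) ^ ((3:ℝ)/2) + b * Real.log (t / cbrt3) + φ)
      ((Real.sqrt 3)⁻¹ * (quarter t ^ 2)⁻¹ + b * quarter t ^ 4) t := by
  have h0 := cbrt3_pos
  have hd : HasDerivAt (fun t => t / cbrt3) (1 / cbrt3) t := (hasDerivAt_id t).div_const _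
  have hp : t / cbrt3 ≠ 0 := by positivity
  refine ((((hd.rpow_const (p := (3:ℝ)/2) (Or.inl hp)).const_mul (2/3)).add
    ((hd.log hp).const_mul b)).add_const φ).congr_deriv ?_
  have e1 : (quarter t ^ 2)⁻¹ = t ^ ((1:ℝ)/2) := by
    rw [quarter_pow ht, ← Real.rpow_neg ht.le]; norm_num
  have e2 : (Real.sqrt 3)⁻¹ = (cbrt3 * cbrt3 ^ ((1:ℝ)/2))⁻¹ := by
    rw [← cbrt3_rpow]
    nth_rewrite 2 [← Real.rpow_one cbrt3]
    rw [← Real.rpow_add h0]; norm_num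
  rw [quarter_four ht, e1, e2, show (3:ℝ)/2 - 1 = 1/2 by norm_num,
    Real.div_rpow ht.le h0.le]
  have : cbrt3 ^ ((1:ℝ)/2) ≠ 0 := by positivity
  field_simp

/-! ### The Painlevé II transcendent -/

theorem stmt_14 (μ : ℝ) (α : ℂ) (hα : α = -Complex.I * μ / 2)
    (u : ℝ → ℂ) (hu : ContDiff ℝ (⊤ : ℕ∞) u)
    (hP : ∀ x : ℝ, deriv (deriv u) x = (x : ℂ) * u x + 2 * (u x) ^ 3 - α)
    (him : ∀ x : ℝ, (u x).re = 0)
    (d : ℂ) (hd : d.re = 0) (φ x₀ K : ℝ) (hx₀ : 0 < x₀) (hK : 0 < K)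
    (hAm : ∀ x : ℝ, x ≤ -x₀ →
      ‖u x - α / x - d * (((-x) ^ (-(1:ℝ)/4) : ℝ) : ℂ) *
        Complex.sin (((2/3 * (-x) ^ ((3:ℝ)/2) : ℝ) : ℂ)
          - 3/4 * d ^ 2 * (Real.log (-x) : ℂ) + (φ : ℂ))‖
        ≤ K * (-x) ^ (-(7:ℝ)/4))
    (Cc : ℂ)
    (hC : Cc = (2 * cbrt3 / (1 - Complex.I * μ)) * (deriv u 0 - (u 0) ^ 2))
    (w : ℝ → ℂ)
    (hw : ∀ x : ℝ, w x =
      (∫ y in (0:ℝ)..x, Complex.exp (((2 / cbrt3 : ℝ) : ℂ) *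
        ∫ z in (0:ℝ)..y, u (z / cbrt3))) - Cc)
    (v : ℝ → ℂ)
    (hv : ∀ x : ℝ, v x = ((2 / cbrt3 : ℝ) : ℂ) * u (x / cbrt3))
    (g : ℝ → ℂ)
    (hg : ∀ x : ℝ, x ≠ 0 →
      g x = Complex.exp (Complex.I * μ * Real.log |x|) * w x / x)
    (gm : ℂ) (hgm : Filter.Tendsto g Filter.atBot (nhds gm)) :
    (∀ x : ℝ, x < 0 → MeasureTheory.IntegrableOn
      (fun y : ℝ => (y : ℂ) ^ (-2 : ℤ) * deriv w y *
        Complex.exp (Complex.I * μ * Real.log |y|) * (v y) ^ 2) (Set.Iic x)) ∧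
    ∃ x₁ : ℝ, 0 < x₁ ∧ ∃ K' : ℝ, 0 < K' ∧ ∀ x : ℝ, x ≤ -x₁ →
      ‖(∫ y in Set.Iic x, (y : ℂ) ^ (-2 : ℤ) * deriv w y *
          Complex.exp (Complex.I * μ * Real.log |y|) * (v y) ^ 2)
        - (2/3) * (1 - Complex.I * μ) * gm * (2 * d ^ 2 / (Real.sqrt 3 : ℂ)) *
            (((-x) ^ (-(3:ℝ)/2) : ℝ) : ℂ)‖ ≤ K' * (-x) ^ (-(3:ℝ)) := by
  have hc0 := cbrt3_pos
  have hcC : (cbrt3 : ℂ) ≠ 0 := by exact_mod_cast hc0.ne'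
  have hcube : (cbrt3 : ℂ) ^ 3 = 3 := by exact_mod_cast cbrt3_cube
  have hμ : (1 - Complex.I * μ : ℂ) ≠ 0 := by
    intro h
    simpa using congrArg Complex.re h
  -- derivatives of `u` and of the rescaled function `v`
  have hu' : ∀ x, HasDerivAt u (deriv u x) x := fun x =>
    (hu.differentiable (by simp) x).hasDerivAt
  have hdu : ContDiff ℝ 1 (deriv u) :=
    ((contDiff_infty_iff_deriv.1 hu).2).of_le (by exact_mod_cast le_top)
  have hu'' : ∀ x, HasDerivAt (deriv u) (deriv (deriv u) x) x := fun x =>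
    (hdu.differentiable (by simp) x).hasDerivAt
  have hsc : ∀ x : ℝ, HasDerivAt (fun x => x / cbrt3) (1 / cbrt3) x := fun x =>
    (hasDerivAt_id x).div_const _
  obtain ⟨v', hv'⟩ : ∃ v' : ℝ → ℂ, ∀ x, v' x = 2 / (cbrt3 : ℂ) ^ 2 * deriv u (x / cbrt3) :=
    ⟨_, fun _ => rfl⟩
  have dv : ∀ x, HasDerivAt v (v' x) x := by
    intro x
    rw [funext hv, hv']
    refine (((hu' (x / cbrt3)).scomp x (hsc x)).const_mul _).congr_deriv ?_
    rw [Complex.real_smul]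
    push_cast
    field_simp
  have dv' : ∀ x, HasDerivAt v' (x * v x / 3 + v x ^ 3 / 2 + Complex.I * μ / 3) x := by
    intro x
    rw [funext hv']
    refine (((hu'' (x / cbrt3)).scomp x (hsc x)).const_mul _).congr_deriv ?_
    rw [Complex.real_smul, hP, hv, hα, ← hcube]
    push_cast
    field_simp
    ring
  -- `E = w'` is the exponential of the primitive of `v`, and is unimodular
  set E : ℝ → ℂ := fun y => Complex.exp (((2 / cbrt3 : ℝ) : ℂ) *
        ∫ z in (0:ℝ)..y, u (z / cbrt3)) with hE
  have huc : Continuous fun z => u (z / cbrt3) := hu.continuous.comp (by fun_prop)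
  have dE : ∀ x, HasDerivAt E (v x * E x) x := by
    intro x
    refine ((huc.integral_hasStrictDerivAt 0 x).hasDerivAt.const_mul _).cexp.congr_deriv ?_
    rw [hv, hE]; ring
  have hEc : Continuous E := continuous_iff_continuousAt.2 fun x => (dE x).continuousAt
  have dw : ∀ x, HasDerivAt w (E x) x := by
    intro x
    rw [funext hw]
    exact (hEc.integral_hasStrictDerivAt 0 x).hasDerivAt.sub_const _
  have hE1 : ∀ x, ‖E x‖ = 1 := by
    intro x
    have : (∫ z in (0:ℝ)..x, u (z / cbrt3)).re = 0 := by
      have := Complex.reCLM.intervalIntegral_comp_comm (μ := volume)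
        (huc.intervalIntegrable 0 x)
      simp only [Complex.reCLM_apply, him, intervalIntegral.integral_zero] at this
      exact this.symm
    rw [hE, Complex.norm_exp, Complex.re_ofReal_mul, this, mul_zero, Real.exp_zero]
  -- first integral of the system for `(w, E, v)`; the constant `Cc` makes it vanish
  have hrel : ∀ x : ℝ, (1 - Complex.I * μ) * w x = (x - 3 * v' x + 3/2 * v x ^ 2) * E x := by
    have dx : ∀ x : ℝ, HasDerivAt (fun x : ℝ => (x : ℂ)) 1 x := fun x =>
      Complex.ofRealCLM.hasDerivAt
    have hD : ∀ x, HasDerivAt (fun x : ℝ => (1 - Complex.I * μ) * w x -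
        ((x:ℂ) - 3 * v' x + 3/2 * v x ^ 2) * E x) 0 x := by
      intro x
      refine (((dw x).const_mul _).sub ((((dx x).sub ((dv' x).const_mul 3)).add
        (((dv x).pow 2).const_mul (3/2))).mul (dE x))).congr_deriv ?_
      simp only [Pi.sub_apply, Pi.add_apply, Pi.pow_apply]
      push_cast
      ring
    have h0 : (1 - Complex.I * μ) * w 0 - (((0:ℝ):ℂ) - 3 * v' 0 + 3/2 * v 0 ^ 2) * E 0 = 0 := by
      have hE0 : E 0 = 1 := by simp [hE]
      have hw0 : w 0 = - Cc := by rw [hw]; simp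
      rw [hE0, hw0, hC, hv, hv', ← hcube, zero_div]
      push_cast
      field_simp
      ring
    intro x
    have := is_const_of_deriv_eq_zero (fun x => (hD x).differentiableAt)
      (fun x => (hD x).deriv) x 0
    simp only [h0] at this
    exact sub_eq_zero.1 this
  -- real parametrisation of the amplitude and the phase
  have hdI : d = Complex.I * (d.im : ℂ) := by
    apply Complex.ext <;> simp [hd]
  set δ : ℝ := d.im with hδ
  set A : ℝ := 2 / cbrt3 * cbrt3 ^ ((1:ℝ)/4) with hA
  set Θ : ℝ → ℝ := fun t => 2/3 * (t / cbrt3) ^ ((3:ℝ)/2) +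
    (3/4 * δ ^ 2) * Real.log (t / cbrt3) + φ with hΘ
  have hqC : ∀ t > 0, (quarter t : ℂ) ^ 4 = (t : ℂ)⁻¹ := fun t ht => by
    exact_mod_cast quarter_four ht
  have hq8 : ∀ t > 0, (quarter t : ℂ) ^ 8 = ((t : ℂ) ^ 2)⁻¹ := fun t ht => by
    exact_mod_cast quarter_eight ht
  have dneg : ∀ t : ℝ, HasDerivAt (fun t : ℝ => -t) (-1) t := fun t => (hasDerivAt_id t).neg
  have dph : ∀ t > 0, HasDerivAt (fun t : ℝ => Complex.exp (Complex.I * μ * Real.log t))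
      (Complex.exp (Complex.I * μ * Real.log t) * (Complex.I * μ * (t:ℂ)⁻¹)) t := by
    intro t ht
    refine (((Real.hasDerivAt_log ht.ne').ofReal_comp).const_mul _).cexp.congr_deriv ?_
    push_cast; ring
  have hr : OrderO 7 (fun t => v (-t) - (Complex.I * μ * (quarter t : ℂ) ^ 4 +
      Complex.I * (A * δ : ℝ) * ((quarter t : ℂ) * (Real.sin (Θ t) : ℂ)))) := by
    refine OrderO.of_bound (C := 2 / cbrt3 * K * (1 / cbrt3) ^ (-(7:ℝ)/4)) ?_
    filter_upwards [eventually_ge_atTop (x₀ * cbrt3), eventually_gt_atTop 0] with t ht ht0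
    have htC : (t : ℂ) ≠ 0 := by exact_mod_cast ht0.ne'
    have h := hAm (-(t / cbrt3)) (by rw [neg_le_neg_iff, le_div_iff₀ hc0]; exact ht)
    have hsin : Complex.sin (((2/3 * (- -(t / cbrt3)) ^ ((3:ℝ)/2) : ℝ) : ℂ)
          - 3/4 * d ^ 2 * (Real.log (- -(t / cbrt3)) : ℂ) + (φ : ℂ)) = (Real.sin (Θ t) : ℂ) := by
      rw [Complex.ofReal_sin]
      congr 1
      rw [hdI, mul_pow, Complex.I_sq, hΘ, neg_neg]
      push_cast
      ring
    rw [hsin, neg_neg] at h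
    have e1 : (t / cbrt3) ^ (-(1:ℝ)/4) = cbrt3 ^ ((1:ℝ)/4) * quarter t := by
      rw [Real.div_rpow ht0.le hc0.le, quarter, show -(1:ℝ)/4 = -(1/4) by ring,
        Real.rpow_neg hc0.le, div_inv_eq_mul, mul_comm]
    have e2 : (t / cbrt3) ^ (-(7:ℝ)/4) = (1 / cbrt3) ^ (-(7:ℝ)/4) * quarter t ^ 7 := by
      rw [quarter_pow ht0, div_eq_mul_one_div, Real.mul_rpow ht0.le (by positivity), mul_comm]
      norm_num
    rw [e1, e2] at h
    have e3 : v (-t) - (Complex.I * μ * (quarter t : ℂ) ^ 4 +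
      Complex.I * (A * δ : ℝ) * ((quarter t : ℂ) * (Real.sin (Θ t) : ℂ))) =
      ((2 / cbrt3 : ℝ) : ℂ) * (u (-(t / cbrt3)) - α / ((-(t / cbrt3) : ℝ) : ℂ) -
        d * ((cbrt3 ^ ((1:ℝ)/4) * quarter t : ℝ) : ℂ) * (Real.sin (Θ t) : ℂ)) := by
      rw [hv, hqC t ht0, hα, hdI, hA, neg_div]
      push_cast
      field_simp
      ring
    rw [e3, norm_mul, Complex.norm_real, Real.norm_of_nonneg (by positivity)]
    calc _ ≤ 2 / cbrt3 * (K * ((1 / cbrt3) ^ (-(7:ℝ)/4) * quarter t ^ 7)) := by gcongr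
      _ = _ := by ring
  obtain ⟨hint, hO⟩ := core_asymptotics μ (A * δ) (Real.sqrt 3)⁻¹ (3/4 * δ ^ 2)
    (by positivity) (fun t => v (-t)) (fun t => - v' (-t))
    (fun t => E (-t) * Complex.exp (Complex.I * μ * Real.log t)) (fun t => g (-t)) Θ gm
    (fun t ht => ((dv (-t)).scomp t (dneg t)).congr_deriv (by simp))
    (fun t ht => by
      refine (((dE (-t)).scomp t (dneg t)).mul (dph t ht)).congr_deriv ?_
      rw [hqC t ht]
      simp only [Function.comp_apply, neg_smul, one_smul]
      ring)
    (fun t ht => by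
      rw [norm_mul, hE1, one_mul, show Complex.I * μ * (Real.log t : ℂ) =
        ((μ * Real.log t : ℝ) : ℂ) * Complex.I by push_cast; ring,
        Complex.norm_exp_ofReal_mul_I])
    (fun t ht => by
      have htC : (t : ℂ) ≠ 0 := by exact_mod_cast ht.ne'
      have hneg : HasDerivAt (fun t : ℝ => -(t:ℂ)) (-1) t :=
        (Complex.ofRealCLM.hasDerivAt (x := t)).neg
      have hq := ((dph t ht).mul ((dw (-t)).scomp t (dneg t))).div hneg (neg_ne_zero.2 htC)
      have heq : ∀ s > 0, g (-s) =
          Complex.exp (Complex.I * μ * Real.log s) * w (-s) / (-(s:ℂ)) := by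
        intro s hs
        rw [hg _ (neg_ne_zero.2 hs.ne'), abs_neg, abs_of_pos hs]
        push_cast; rfl
      refine (hq.congr_of_eventuallyEq ?_).congr_deriv ?_
      · filter_upwards [Ioi_mem_nhds ht] with s hs
        rw [heq s hs]; rfl
      · rw [heq t ht, hqC t ht]
        simp only [Function.comp_apply, neg_smul, one_smul, Pi.mul_apply]
        field_simp
        ring)
    (fun t ht => by
      have htC : (t : ℂ) ≠ 0 := by exact_mod_cast ht.ne'
      have h := hrel (-t)
      rw [hg _ (neg_ne_zero.2 ht.ne'), abs_neg, abs_of_pos ht, hqC t ht]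
      push_cast at h ⊢
      field_simp
      linear_combination (-2 : ℂ) * h)
    (hgm.comp tendsto_neg_atTop_atBot)
    (fun t ht => hasDerivAt_phase _ _ ht) hr
  set f : ℝ → ℂ := fun y : ℝ => (y : ℂ) ^ (-2 : ℤ) * deriv w y *
        Complex.exp (Complex.I * μ * Real.log |y|) * (v y) ^ 2 with hf
  have hfe : ∀ t > 0, f (-t) = (quarter t : ℂ) ^ 8 *
      (E (-t) * Complex.exp (Complex.I * μ * Real.log t)) * v (-t) ^ 2 := by
    intro t ht
    rw [hf]
    simp only
    rw [(dw (-t)).deriv, abs_neg, abs_of_pos ht, hq8 t ht, zpow_neg]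
    push_cast
    norm_cast
    rw [neg_sq]
    ring
  constructor
  · intro x hx
    have h1 : IntegrableOn (fun t => f (-t)) (Set.Ici (-x)) :=
      (hint (-x) (by linarith)).congr_fun
        (fun t ht => (hfe t (lt_of_lt_of_le (by linarith) ht)).symm) measurableSet_Ici
    simpa using h1.comp_neg_Iic
  · obtain ⟨C, hC0, hb⟩ := hO.exists_bound
    obtain ⟨T, hT⟩ := eventually_atTop.1 hb
    refine ⟨max T 1, by positivity, C, hC0, fun x hx => ?_⟩
    have hxT : T ≤ -x := (le_max_left T 1).trans (by linarith)
    have hx1 : 0 < -x := lt_of_lt_of_le one_pos ((le_max_right T 1).trans (by linarith))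
    have h := hT (-x) hxT
    have hi : ∫ y in Set.Iic x, f y = ∫ t in Set.Ioi (-x), (quarter t : ℂ) ^ 8 *
      (E (-t) * Complex.exp (Complex.I * μ * Real.log t)) * v (-t) ^ 2 := by
      have := integral_comp_neg_Ioi (-x) f
      rw [neg_neg] at this
      rw [← this]
      exact setIntegral_congr_fun measurableSet_Ioi fun t ht => hfe t (hx1.trans ht)
    have e6 : quarter (-x) ^ 6 = (-x) ^ (-(3:ℝ)/2) := by
      rw [quarter_pow hx1]; norm_num
    have e12 : quarter (-x) ^ 12 = (-x) ^ (-(3:ℝ)) := by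
      rw [quarter_pow hx1]; norm_num
    have hamp : ((A * δ : ℝ) : ℂ) ^ 2 = -(4 * d ^ 2 / (Real.sqrt 3 : ℂ)) := by
      have : ((A * δ : ℝ) : ℂ) ^ 2 = ((4 / Real.sqrt 3 * δ ^ 2 : ℝ) : ℂ) := by
        rw [← amplitude_sq, ← hA]; push_cast; ring
      rw [this, hdI, mul_pow, Complex.I_sq]
      push_cast; ring
    rw [← e12, hi, ← e6]
    refine le_of_eq_of_le ?_ h
    rw [hamp]
    push_cast
    congr 1
    ring
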